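/- arXiv:2102.04023 — 3 statements merged into one kernel-verified Lean document; each statement's English description precedes it below -/
import Mathlib

section
/- Let u₁, …, u_m be nontrivial elements generating a subgroup U of G, and set U_i = ⟨u_i, …, u_m⟩ with U_{m+1} = 1. Suppose that (i) u_j⁻¹ · u_i · u_j ∈ U_{j+1} for all 1 ≤ j < i ≤ m, (ii) u_i^{r(u_i)} ∈ U_{i+1} for all i with r(u_i) > 0, and (iii) d(u₁) < ⋯ < d(u_m). Then U_i = G_{d(u_i)} ∩ U for every 1 ≤ i ≤ m. -/
/-!
Write `V = U_{j+1}`. Hypothesis (i) only gives `u_j⁻¹ V u_j ≤ V`; the reverse inclusion comes from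
the ascending chain condition on subgroups of the polycyclic group `G`
(`exists_stable_inf`), applied to the chain `u_j ^ k V u_j ^ (-k)`. Hence `u_j` normalizes `V`
(`mem_normalizer_of_conj_le`) and every element of `U_j` has the form `u_j ^ e * v` with `v ∈ V`.
If such an element lies in `G_{d(u_j)+1}`, then so does `u_j ^ e`, because `V ≤ G_{d(u_j)+1}` by
(iii); thus `r(u_j) ∣ e`, and (ii) puts `u_j ^ e`, hence the element itself, in `V`.
Since the depths increase, an element of `U ∩ G_{d(u_i)}` descends in this way from `U_1` to `U_i`.
-/

/-- The exponents `e` for which the coset `y ^ e * H'` meets `A ⊓ H`, where `H'` is normal in `H`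
and `y ∈ H`. When `y` generates `H / H'`, this describes the image of `A ⊓ H` in that quotient. -/
def expSubgroup {G : Type*} [Group G] (A H H' : Subgroup G) (y : G) (hy : y ∈ H)
    (hn : ∀ x ∈ H, ∀ z ∈ H', x * z * x⁻¹ ∈ H') : AddSubgroup ℤ where
  carrier := {e | ∃ x ∈ A, x ∈ H ∧ (y ^ e)⁻¹ * x ∈ H'}
  zero_mem' := ⟨1, A.one_mem, H.one_mem, by simp⟩
  add_mem' := by
    rintro a b ⟨x, hxA, hxH, hx⟩ ⟨x', hxA', hxH', hx'⟩
    refine ⟨x * x', A.mul_mem hxA hxA', H.mul_mem hxH hxH', ?_⟩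
    have h := H'.mul_mem (hn (y ^ b)⁻¹ (H.inv_mem (H.zpow_mem hy b)) _ hx) hx'
    have e : (y ^ (a + b))⁻¹ * (x * x') =
        (y ^ b)⁻¹ * ((y ^ a)⁻¹ * x) * ((y ^ b)⁻¹)⁻¹ * ((y ^ b)⁻¹ * x') := by
      rw [zpow_add]; group
    rw [e]; exact h
  neg_mem' := by
    rintro a ⟨x, hxA, hxH, hx⟩
    refine ⟨x⁻¹, A.inv_mem hxA, H.inv_mem hxH, ?_⟩
    have h := hn x hxH _ (H'.inv_mem hx)
    have e : (y ^ (-a))⁻¹ * x⁻¹ = x * ((y ^ a)⁻¹ * x)⁻¹ * x⁻¹ := by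
      group
    rw [e]; exact h

/-- Ascending chain condition on subgroups of a polycyclic group, by downward induction along the
series: a chain stabilizes on `GG i` once it does on `GG (i + 1)` and its images in the cyclic
quotient, recorded by subgroups of `ℤ`, do. -/
theorem exists_stable_inf {G : Type*} [Group G] (n : ℕ) (GG : ℕ → Subgroup G)
    (hGbot : GG (n + 1) = ⊥)
    (hGnorm : ∀ i, 1 ≤ i → i ≤ n → ∀ x ∈ GG i, ∀ y ∈ GG (i + 1), x * y * x⁻¹ ∈ GG (i + 1))
    (hGcyc : ∀ i, 1 ≤ i → i ≤ n → ∃ y ∈ GG i, ∀ x ∈ GG i, ∃ e : ℤ,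
      (y ^ e)⁻¹ * x ∈ GG (i + 1))
    (A : ℕ →o Subgroup G) (d : ℕ) (hd : d ≤ n) :
    ∃ N, ∀ k, N ≤ k → A k ⊓ GG (n + 1 - d) ≤ A N := by
  induction d with
  | zero => exact ⟨0, fun k _ => by simp [hGbot]⟩
  | succ d ih =>
    obtain ⟨N₁, hN₁⟩ := ih (by omega)
    obtain ⟨i, hi⟩ : ∃ i, i = n - d := ⟨_, rfl⟩
    rw [show n + 1 - d = i + 1 by omega] at hN₁
    rw [show n + 1 - (d + 1) = i by omega]
    obtain ⟨y, hy, hcyc⟩ := hGcyc i (by omega) (by omega)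
    have hn := hGnorm i (by omega) (by omega)
    let E : ℕ →o Submodule ℤ ℤ :=
      ⟨fun k => AddSubgroup.toIntSubmodule (expSubgroup (A k) (GG i) (GG (i + 1)) y hy hn), by
        rintro a b hab e ⟨x, hxA, hx⟩
        exact ⟨x, A.monotone hab hxA, hx⟩⟩
    obtain ⟨N₂, hN₂⟩ := monotone_stabilizes_iff_noetherian.mpr
      (inferInstance : IsNoetherian ℤ ℤ) E
    refine ⟨max N₁ N₂, fun k hk x hx => ?_⟩
    obtain ⟨hxA, hxi⟩ := Subgroup.mem_inf.mp hx
    obtain ⟨e, he⟩ := hcyc x hxi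
    have hek : e ∈ E k := ⟨x, hxA, hxi, he⟩
    rw [← hN₂ k (le_trans (le_max_right _ _) hk)] at hek
    obtain ⟨x', hx'A, hx'i, hx'⟩ := hek
    have hx'N : x' ∈ A (max N₁ N₂) := A.monotone (le_max_right _ _) hx'A
    have h1 : x'⁻¹ * x ∈ GG (i + 1) := by
      have h := (GG (i + 1)).mul_mem ((GG (i + 1)).inv_mem hx') he
      have e' : ((y ^ e)⁻¹ * x')⁻¹ * ((y ^ e)⁻¹ * x) = x'⁻¹ * x := by group
      rwa [e'] at h
    have h2 : x'⁻¹ * x ∈ A k := (A k).mul_mem ((A k).inv_mem (A.monotone hk hx'N)) hxA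
    have h3 := A.monotone (le_max_left N₁ N₂)
      (hN₁ k (le_trans (le_max_left _ _) hk) (Subgroup.mem_inf.mpr ⟨h2, h1⟩))
    have h4 := (A (max N₁ N₂)).mul_mem hx'N h3
    rwa [mul_inv_cancel_left] at h4

/-- Under the ascending chain condition, a one-sided conjugation inclusion already gives
normalization. -/
theorem mem_normalizer_of_conj_le {G : Type*} [Group G]
    (hacc : ∀ A : ℕ →o Subgroup G, ∃ N, ∀ k, N ≤ k → A k ≤ A N)
    (V : Subgroup G) (g : G) (h : ∀ v ∈ V, g⁻¹ * v * g ∈ V) : ∀ v, v ∈ V ↔ g * v * g⁻¹ ∈ V := by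
  let A : ℕ →o Subgroup G :=
    ⟨fun k => V.comap (MulAut.conj (g ^ k)⁻¹).toMonoidHom, monotone_nat_of_le_succ (by
      intro k x hx
      have h' := h _ (Subgroup.mem_comap.mp hx)
      refine Subgroup.mem_comap.mpr ?_
      simpa [pow_succ, mul_assoc] using h')⟩
  have hA : ∀ k x, x ∈ A k ↔ (g ^ k)⁻¹ * x * g ^ k ∈ V := by
    intro k x
    change (g ^ k)⁻¹ * x * ((g ^ k)⁻¹)⁻¹ ∈ V ↔ _
    rw [inv_inv]
  obtain ⟨N, hN⟩ := hacc A
  intro v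
  constructor
  · intro hv
    -- The conjugate of `v` by `g ^ (N + 1)` lies in the `(N + 1)`-st term of the chain.
    have h1 : g ^ (N + 1) * v * (g ^ (N + 1))⁻¹ ∈ A N :=
      hN (N + 1) (Nat.le_succ N) ((hA _ _).2 (by simpa [mul_assoc] using hv))
    rw [hA] at h1
    have e : (g ^ N)⁻¹ * (g ^ (N + 1) * v * (g ^ (N + 1))⁻¹) * g ^ N = g * v * g⁻¹ := by
      rw [pow_succ]; group
    rwa [e] at h1
  · intro hv
    have h1 := h _ hv
    have e : g⁻¹ * (g * v * g⁻¹) * g = v := by group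
    rwa [e] at h1

/-- If nontrivial elements `u₁, …, u_m` generate `U ≤ G` and satisfy
(i) `u_j⁻¹ u_i u_j ∈ U_{j+1}` for `j < i`, (ii) `u_i ^ r(u_i) ∈ U_{i+1}` whenever the
relative order `r(u_i)` is positive, and (iii) `d(u₁) < ⋯ < d(u_m)`, then
`U_i = G_{d(u_i)} ∩ U` for all `i`.  Here `Usub i = ⟨u_i, …, u_m⟩` (1-based),
`dep i = d(u_i)` and `ro i = r(u_i)` (least positive `k` with `u_i ^ k ∈ G_{d(u_i)+1}`,
`0` if none exists). -/
theorem stmt_2 {G : Type*} [Group G] (n : ℕ) (GG : ℕ → Subgroup G)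
    (hGtop : GG 1 = ⊤) (hGbot : GG (n + 1) = ⊥)
    (hGle : ∀ i, 1 ≤ i → i ≤ n → GG (i + 1) ≤ GG i)
    (hGnorm : ∀ i, 1 ≤ i → i ≤ n → ∀ x ∈ GG i, ∀ y ∈ GG (i + 1), x * y * x⁻¹ ∈ GG (i + 1))
    (hGcyc : ∀ i, 1 ≤ i → i ≤ n → ∃ y ∈ GG i, ∀ x ∈ GG i, ∃ e : ℤ,
      (y ^ e)⁻¹ * x ∈ GG (i + 1))
    (m : ℕ) (u : Fin m → G) (hu : ∀ i, u i ≠ 1)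
    (U : Subgroup G) (hU : Subgroup.closure (Set.range u) = U)
    (dep : Fin m → ℕ) (hdep : ∀ i, 1 ≤ dep i ∧ dep i ≤ n)
    (hmem : ∀ i, u i ∈ GG (dep i)) (hnmem : ∀ i, u i ∉ GG (dep i + 1))
    (ro : Fin m → ℕ)
    (hro : ∀ i, (ro i = 0 ∧ ∀ k : ℕ, 0 < k → u i ^ k ∉ GG (dep i + 1)) ∨
      (0 < ro i ∧ u i ^ ro i ∈ GG (dep i + 1) ∧
        ∀ k : ℕ, 0 < k → k < ro i → u i ^ k ∉ GG (dep i + 1)))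
    (Usub : ℕ → Subgroup G)
    (hUsub : ∀ i, Usub i = Subgroup.closure (u '' {j : Fin m | i ≤ (j : ℕ) + 1}))
    (hconj : ∀ i j : Fin m, j < i → (u j)⁻¹ * u i * u j ∈ Usub ((j : ℕ) + 2))
    (hpow : ∀ i : Fin m, 0 < ro i → u i ^ ro i ∈ Usub ((i : ℕ) + 2))
    (hmono : StrictMono dep) :
    ∀ i : Fin m, Usub ((i : ℕ) + 1) = GG (dep i) ⊓ U := by
  have hanti : ∀ a b, 1 ≤ a → a ≤ b → b ≤ n + 1 → GG b ≤ GG a := by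
    intro a b ha hab
    induction b, hab using Nat.le_induction with
    | base => intro _; exact le_rfl
    | succ b hab ih => exact fun hb => (hGle b (by omega) (by omega)).trans (ih (by omega))
  have hacc : ∀ A : ℕ →o Subgroup G, ∃ N, ∀ k, N ≤ k → A k ≤ A N := by
    intro A
    obtain ⟨N, hN⟩ := exists_stable_inf n GG hGbot hGnorm hGcyc A n le_rfl
    rw [Nat.add_sub_cancel_left, hGtop] at hN
    exact ⟨N, fun k hk => by simpa using hN k hk⟩
  have hUle : ∀ (i : ℕ) (H : Subgroup G), (∀ j : Fin m, i ≤ (j : ℕ) + 1 → u j ∈ H) →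
      Usub i ≤ H := by
    intro i H hH
    rw [hUsub, Subgroup.closure_le]
    rintro _ ⟨j, hj, rfl⟩
    exact hH j hj
  have hUmem : ∀ (i : ℕ) (j : Fin m), i ≤ (j : ℕ) + 1 → u j ∈ Usub i := by
    intro i j hj
    rw [hUsub]
    exact Subgroup.subset_closure ⟨j, hj, rfl⟩
  -- A power of `u_j` in the next term of the series has exponent divisible by the relative order.
  have hpowmem : ∀ (j : Fin m) (e : ℤ), u j ^ e ∈ GG (dep j + 1) →
      u j ^ e ∈ Usub ((j : ℕ) + 2) := by
    intro j e he
    rcases hro j with ⟨_, h⟩ | ⟨hpos, hr, hmin⟩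
    · have he0 : e = 0 := by
        by_contra hne
        refine h e.natAbs (Int.natAbs_pos.mpr hne) ?_
        rw [← zpow_natCast]
        rcases Int.natAbs_eq e with h' | h'
        · rwa [← h']
        · rw [h', zpow_neg] at he
          exact inv_mem_iff.mp he
      rw [he0, zpow_zero]
      exact Subgroup.one_mem _
    · have hsplit : u j ^ e = u j ^ (e % (ro j : ℤ)) * (u j ^ ro j) ^ (e / (ro j : ℤ)) := by
        rw [← zpow_natCast (u j) (ro j), ← zpow_mul, ← zpow_add, Int.emod_add_mul_ediv]
      have hmod : u j ^ (e % (ro j : ℤ)) ∈ GG (dep j + 1) := by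
        rw [hsplit] at he
        exact (Subgroup.mul_mem_cancel_right _ (Subgroup.zpow_mem _ hr _)).mp he
      have h0 : e % (ro j : ℤ) = 0 := by
        have hnn := Int.emod_nonneg e (b := (ro j : ℤ)) (by omega)
        have hlt := Int.emod_lt_of_pos e (b := (ro j : ℤ)) (by omega)
        obtain ⟨k, hk⟩ := Int.eq_ofNat_of_zero_le hnn
        rw [hk] at hmod hlt ⊢
        by_contra hne
        refine hmin k (by omega) (by omega) ?_
        simpa using hmod
      rw [hsplit, h0, zpow_zero, one_mul]
      exact Subgroup.zpow_mem _ (hpow j hpos) _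
  have hdeep : ∀ j : Fin m, Usub ((j : ℕ) + 2) ≤ GG (dep j + 1) := by
    intro j
    refine hUle _ _ fun i hi => ?_
    have hlt : dep j < dep i := hmono (Fin.lt_def.mpr (by omega))
    exact hanti (dep j + 1) (dep i) (by omega) hlt (by have := hdep i; omega) (hmem i)
  have hform : ∀ (j : Fin m) (x : G), x ∈ Usub ((j : ℕ) + 1) →
      ∃ e : ℤ, ∃ v ∈ Usub ((j : ℕ) + 2), u j ^ e * v = x := by
    intro j x hx
    have hconjV : ∀ v ∈ Usub ((j : ℕ) + 2), (u j)⁻¹ * v * u j ∈ Usub ((j : ℕ) + 2) := by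
      have hle : Usub ((j : ℕ) + 2) ≤
          (Usub ((j : ℕ) + 2)).comap (MulAut.conj (u j)⁻¹).toMonoidHom := by
        refine hUle _ _ fun i hi => ?_
        simpa [Subgroup.mem_comap] using hconj i j (Fin.lt_def.mpr (by omega))
      intro v hv
      simpa [Subgroup.mem_comap] using hle hv
    have hnorm : Subgroup.zpowers (u j) ≤ Subgroup.normalizer (Usub ((j : ℕ) + 2)) := by
      rw [Subgroup.zpowers_le, Subgroup.mem_normalizer_iff]
      exact mem_normalizer_of_conj_le hacc _ _ hconjV
    have hsup : Usub ((j : ℕ) + 1) ≤ Subgroup.zpowers (u j) ⊔ Usub ((j : ℕ) + 2) := by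
      refine hUle _ _ fun i hi => ?_
      rcases eq_or_ne i j with rfl | hne
      · exact (le_sup_left : _ ≤ _ ⊔ Usub _) (Subgroup.mem_zpowers _)
      · have : (i : ℕ) ≠ j := fun h => hne (Fin.ext h)
        exact (le_sup_right : Usub _ ≤ _) (hUmem _ i (by omega))
    have hx' : x ∈ ((Subgroup.zpowers (u j) ⊔ Usub ((j : ℕ) + 2) : Subgroup G) : Set G) := hsup hx
    rw [Subgroup.coe_mul_of_left_le_normalizer_right _ _ hnorm] at hx'
    obtain ⟨_, ⟨e, rfl⟩, v, hv, rfl⟩ := hx'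
    exact ⟨e, v, hv, rfl⟩
  have hU1 : Usub 1 = U := by
    rw [hUsub, ← hU, ← Set.image_univ]
    congr 2
    ext j
    simp
  intro i
  apply le_antisymm
  · refine le_inf (hUle _ _ fun j hj => ?_) (hUle _ _ fun j _ => ?_)
    · have hle : dep i ≤ dep j := hmono.monotone (Fin.le_def.mpr (by omega))
      exact hanti _ _ (hdep i).1 hle (by have := hdep j; omega) (hmem j)
    · rw [← hU]; exact Subgroup.subset_closure ⟨j, rfl⟩
  · intro x hx
    obtain ⟨hxi, hxU⟩ := Subgroup.mem_inf.mp hx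
    have key : ∀ k : ℕ, k ≤ (i : ℕ) → x ∈ Usub (k + 1) := by
      intro k
      induction k with
      | zero => intro _; rw [zero_add, hU1]; exact hxU
      | succ k ih =>
        intro hk
        obtain ⟨j, hj⟩ : ∃ j : Fin m, (j : ℕ) = k := ⟨⟨k, by omega⟩, rfl⟩
        subst hj
        obtain ⟨e, v, hv, rfl⟩ := hform j x (ih (by omega))
        have hlt : dep j < dep i := hmono (Fin.lt_def.mpr (by omega))
        have hxj := hanti (dep j + 1) (dep i) (by omega) hlt (by have := hdep i; omega) hxi
        have he := (Subgroup.mul_mem_cancel_right _ (hdeep j hv)).mp hxj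
        exact Subgroup.mul_mem _ (hpowmem j e he) hv
    exact key i le_rfl
end

section
/- Let h, k ∈ G both have depth d, let a = l(h) and b = l(k) (both nonzero), let e = gcd(a, b), choose integers u, v with u·a + v·b = e, and set w = h^u · k^v. Then w ∈ G_d, the coset w·G_{d+1} equals g_d^e·G_{d+1}, and the subgroup of G generated by {h, k} together with G_{d+1} equals the subgroup generated by w together with G_{d+1}. -/
/-! Modulo the normal subgroup `G_{d+1}` of `G_d`, the elements `h` and `k` are the powers
`g_d ^ a` and `g_d ^ b`, so `w` is `g_d ^ (u * a + v * b) = g_d ^ e`. As `e` divides `a` and `b`,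
both `h` and `k` are powers of `w` modulo `G_{d+1}`, while `w` is a word in `h` and `k`; hence the
two generating sets span the same subgroup. The congruences are computed in the quotient group
`G_d / G_{d+1}` (`coset_zpow_mul_zpow`). -/

/-- If `x` and `y` are congruent to `g ^ a` and `g ^ b` modulo a subgroup `N` normalized by `H`,
then `x ^ u * y ^ v` is congruent to `g ^ (u * a + v * b)`. -/
theorem coset_zpow_mul_zpow {G : Type*} [Group G] {H N : Subgroup G}
    (hnorm : ∀ x ∈ H, ∀ y ∈ N, x * y * x⁻¹ ∈ N) {g x y : G} (hg : g ∈ H) (hx : x ∈ H)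
    (hy : y ∈ H) {a b : ℤ} (ha : (g ^ a)⁻¹ * x ∈ N) (hb : (g ^ b)⁻¹ * y ∈ N) (u v : ℤ) :
    (g ^ (u * a + v * b))⁻¹ * (x ^ u * y ^ v) ∈ N := by
  have : (N.subgroupOf H).Normal := ⟨fun n hn z => hnorm z z.2 n hn⟩
  lift g to H using hg
  lift x to H using hx
  lift y to H using hy
  have ha' : ((g ^ a : H) : H ⧸ N.subgroupOf H) = x := QuotientGroup.eq.2 ha
  have hb' : ((g ^ b : H) : H ⧸ N.subgroupOf H) = y := QuotientGroup.eq.2 hb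
  have key : ((g ^ (u * a + v * b) : H) : H ⧸ N.subgroupOf H) = (x ^ u * y ^ v : H) := by
    rw [QuotientGroup.mk_mul, QuotientGroup.mk_zpow _ x, QuotientGroup.mk_zpow _ y, ← ha', ← hb',
      mul_comm u, mul_comm v, zpow_add, zpow_mul, zpow_mul]
    rfl
  have mem := QuotientGroup.eq.1 key
  rwa [Subgroup.mem_subgroupOf] at mem

/-- Let `h, k ∈ G` both have depth `d`, with leading exponents `a = l(h)`
and `b = l(k)` (both nonzero; `l` is characterised by the coset conditions
`h·G_{d+1} = g_d^a·G_{d+1}` and `k·G_{d+1} = g_d^b·G_{d+1}`).  Let `e = gcd(a, b)`,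
choose `u, v` with `u·a + v·b = e`, and set `w = h^u · k^v`.  Then `w ∈ G_d`, the coset
`w·G_{d+1}` equals `g_d^e·G_{d+1}`, and `⟨{h, k} ∪ G_{d+1}⟩ = ⟨{w} ∪ G_{d+1}⟩`. -/
theorem stmt_7 {G : Type*} [Group G] (n : ℕ) (GG : ℕ → Subgroup G) (gg : ℕ → G)
    (hGtop : GG 1 = ⊤) (hGbot : GG (n + 1) = ⊥)
    (hGle : ∀ i, 1 ≤ i → i ≤ n → GG (i + 1) ≤ GG i)
    (hGnorm : ∀ i, 1 ≤ i → i ≤ n → ∀ x ∈ GG i, ∀ y ∈ GG (i + 1), x * y * x⁻¹ ∈ GG (i + 1))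
    (hgg : ∀ i, 1 ≤ i → i ≤ n → gg i ∈ GG i ∧
      ∀ x ∈ GG i, ∃ e : ℤ, (gg i ^ e)⁻¹ * x ∈ GG (i + 1))
    (h k : G) (d : ℕ) (hd1 : 1 ≤ d) (hd2 : d ≤ n)
    (hh1 : h ∈ GG d) (hh2 : h ∉ GG (d + 1))
    (hk1 : k ∈ GG d) (hk2 : k ∉ GG (d + 1))
    (a b : ℤ) (ha0 : a ≠ 0) (hb0 : b ≠ 0)
    (ha : (gg d ^ a)⁻¹ * h ∈ GG (d + 1)) (hb : (gg d ^ b)⁻¹ * k ∈ GG (d + 1))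
    (e : ℤ) (he : e = Int.gcd a b)
    (u v : ℤ) (huv : u * a + v * b = e)
    (w : G) (hw : w = h ^ u * k ^ v) :
    w ∈ GG d
    ∧ (gg d ^ e)⁻¹ * w ∈ GG (d + 1)
    ∧ Subgroup.closure ({h, k} ∪ (GG (d + 1) : Set G))
      = Subgroup.closure ({w} ∪ (GG (d + 1) : Set G)) := by
  have hg := (hgg d hd1 hd2).1
  have hnorm := hGnorm d hd1 hd2
  have hwH : w ∈ GG d := hw ▸ mul_mem (zpow_mem hh1 u) (zpow_mem hk1 v)
  have hwe : (gg d ^ e)⁻¹ * w ∈ GG (d + 1) := by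
    rw [← huv, hw]
    exact coset_zpow_mul_zpow hnorm hg hh1 hk1 ha hb u v
  -- An element congruent to a power of `g_d ^ e` lies in the subgroup spanned by `w` and `G_{d+1}`.
  have mem_right : ∀ (x : G) (c : ℤ), e ∣ c → (gg d ^ c)⁻¹ * x ∈ GG (d + 1) →
      x ∈ Subgroup.closure ({w} ∪ (GG (d + 1) : Set G)) := by
    rintro x c ⟨m, rfl⟩ hx
    have hwm := coset_zpow_mul_zpow hnorm hg hwH hwH hwe hwe m 0
    rw [zero_mul, add_zero, zpow_zero, mul_one, mul_comm m] at hwm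
    have hn : (w ^ m)⁻¹ * x ∈ GG (d + 1) := by
      simpa [mul_assoc] using mul_mem (inv_mem hwm) hx
    rw [← mul_inv_cancel_left (w ^ m) x]
    have hw' : w ∈ Subgroup.closure ({w} ∪ (GG (d + 1) : Set G)) :=
      Subgroup.subset_closure (by simp)
    exact mul_mem (zpow_mem hw' m)
      (Subgroup.subset_closure (Or.inr hn))
  refine ⟨hwH, hwe, le_antisymm ?_ ?_⟩
  · rw [Subgroup.closure_le]
    rintro x ((rfl | rfl) | hx)
    · exact mem_right _ a (he ▸ Int.gcd_dvd_left a b) ha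
    · exact mem_right _ b (he ▸ Int.gcd_dvd_right a b) hb
    · exact Subgroup.subset_closure (Or.inr hx)
  · rw [Subgroup.closure_le]
    rintro x (rfl | hx)
    · rw [hw]
      have hh' : h ∈ Subgroup.closure ({h, k} ∪ (GG (d + 1) : Set G)) :=
        Subgroup.subset_closure (by simp)
      have hk' : k ∈ Subgroup.closure ({h, k} ∪ (GG (d + 1) : Set G)) :=
        Subgroup.subset_closure (by simp)
      exact mul_mem (zpow_mem hh' u) (zpow_mem hk' v)
    · exact Subgroup.subset_closure (Or.inr hx)
end

section
/- Every finitely generated subgroup U of G possesses an igs; that is, there exist nontrivial elements u₁, …, u_m generating U such that the chain of subgroups U_i = ⟨u_i, …, u_m⟩ (with U_{m+1} = 1) coincides with the chain of subgroups G_i ∩ U, i = 1, …, n+1, after removal of consecutive duplicates. -/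
/-!
Put `Uᵢ = Gᵢ ⊓ U`. The factor `Uᵢ / Uᵢ₊₁` embeds into the cyclic group `Gᵢ / Gᵢ₊₁`, so it is
cyclic; a lift `v` of a generator satisfies `Uᵢ = ⟨v⟩ Uᵢ₊₁` (`exists_relative_generator`).
Working upwards from the trivial end of the chain, one prepends such a `v` to the sequence exactly
when `Uᵢ ≠ Uᵢ₊₁` (`exists_list_of_chain`). Then `v ≠ 1`, and the subgroups generated by the tails of
the resulting sequence are the distinct members of the chain, in order.
-/

/-- A subgroup of a cyclic factor is cyclic: if `A / B` is cyclic, then so is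
`(A ⊓ U) / (B ⊓ U)`, and `v` is a lift of a generator. -/
theorem exists_relative_generator {G : Type*} [Group G] (A B U : Subgroup G) (_hle : B ≤ A)
    (hnorm : ∀ x ∈ A, ∀ y ∈ B, x * y * x⁻¹ ∈ B)
    (hcyc : ∃ y ∈ A, ∀ x ∈ A, ∃ e : ℤ, (y ^ e)⁻¹ * x ∈ B) :
    ∃ v ∈ A ⊓ U, ∀ x ∈ A ⊓ U, ∃ e : ℤ, (v ^ e)⁻¹ * x ∈ B ⊓ U := by
  have hN : (B.subgroupOf A).Normal :=
    ⟨fun y hy x => by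
      rw [Subgroup.mem_subgroupOf] at hy ⊢
      exact hnorm x x.2 y hy⟩
  obtain ⟨y, hyA, hy⟩ := hcyc
  have : IsCyclic (A ⧸ B.subgroupOf A) := by
    refine ⟨⟨QuotientGroup.mk ⟨y, hyA⟩, fun q => ?_⟩⟩
    obtain ⟨x, rfl⟩ := QuotientGroup.mk_surjective q
    obtain ⟨e, he⟩ := hy x x.2
    refine ⟨e, ?_⟩
    change (QuotientGroup.mk (⟨y, hyA⟩ : A) : A ⧸ B.subgroupOf A) ^ e = _
    rw [← QuotientGroup.mk_zpow, QuotientGroup.eq, Subgroup.mem_subgroupOf]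
    simpa using he
  obtain ⟨⟨_, v, hvU, rfl⟩, hv⟩ := IsCyclic.exists_generator
    (α := (U.subgroupOf A).map (QuotientGroup.mk' (B.subgroupOf A)))
  refine ⟨v, ⟨v.2, hvU⟩, fun x hx => ?_⟩
  obtain ⟨e, he⟩ := hv ⟨_, ⟨x, hx.1⟩, hx.2, rfl⟩
  refine ⟨e, ?_, U.mul_mem (U.inv_mem (U.zpow_mem hvU e)) hx.2⟩
  have h := congrArg Subtype.val he
  change (QuotientGroup.mk v : A ⧸ B.subgroupOf A) ^ e = QuotientGroup.mk ⟨x, hx.1⟩ at h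
  rw [← QuotientGroup.mk_zpow, QuotientGroup.eq, Subgroup.mem_subgroupOf] at h
  simpa using h

theorem destutter_cons_of_ne {α : Type*} [DecidableRel (fun a b : α => a ≠ b)] {a b : α}
    (hab : a ≠ b) (L : List α) :
    List.destutter (· ≠ ·) (a :: b :: L) = a :: List.destutter (· ≠ ·) (b :: L) := by
  rw [List.destutter_cons_cons, if_pos hab]
  rfl

theorem destutter_cons_self {α : Type*} [DecidableRel (fun a b : α => a ≠ b)]
    (a : α) (L : List α) :
    List.destutter (· ≠ ·) (a :: a :: L) = List.destutter (· ≠ ·) (a :: L) := by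
  rw [List.destutter_cons_cons, if_neg (by simp)]
  rfl

/-- A finite descending chain ending in the trivial subgroup, each member of which is generated by
the next one together with a single element, is realised (up to consecutive repetitions) by the
subgroups generated by the tails of a list of nontrivial elements. -/
theorem exists_list_of_chain {G : Type*} [Group G]
    [DecidableRel (fun a b : Subgroup G => a ≠ b)] (n : ℕ) :
    ∀ H : ℕ → Subgroup G, H n = ⊥ →
      (∀ i < n, ∃ v, H i = Subgroup.closure {v} ⊔ H (i + 1)) →
      ∃ l : List G, (∀ x ∈ l, x ≠ 1) ∧ Subgroup.closure {x | x ∈ l} = H 0 ∧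
        (l.tails.map fun t => Subgroup.closure {x | x ∈ t}).destutter (· ≠ ·)
          = ((List.range (n + 1)).map H).destutter (· ≠ ·) := by
  induction n with
  | zero =>
    intro H h0 _
    exact ⟨[], by simp, by simp [h0], by simp [h0]⟩
  | succ n ih =>
    intro H hbot hstep
    obtain ⟨l, hl1, hl2, hl3⟩ := ih (fun i => H (i + 1)) hbot
      (fun i hi => hstep (i + 1) (by omega))
    obtain ⟨v, hv⟩ := hstep 0 (by omega)
    have hr : (List.range (n + 1 + 1)).map H
        = H 0 :: H 1 :: (List.range n).map (fun i => H (i + 1 + 1)) := by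
      simp [List.range_succ_eq_map, Function.comp_def]
    have hr' : (List.range (n + 1)).map (fun i => H (i + 1))
        = H 1 :: (List.range n).map (fun i => H (i + 1 + 1)) := by
      simp [List.range_succ_eq_map, Function.comp_def]
    rw [hr'] at hl3
    by_cases h : H 0 = H 1
    · refine ⟨l, hl1, hl2.trans h.symm, ?_⟩
      rw [hl3, hr, h, destutter_cons_self]
    · have hcl : Subgroup.closure {x | x ∈ v :: l} = H 0 := by
        rw [hv, ← hl2, ← Subgroup.closure_union]
        congr 1
        ext x
        simp
      refine ⟨v :: l, ?_, hcl, ?_⟩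
      · simp only [List.mem_cons, forall_eq_or_imp]
        refine ⟨?_, hl1⟩
        rintro rfl
        exact h (by simpa using hv)
      · obtain ⟨T, hT⟩ : ∃ T, l.tails = l :: T := by
          cases l <;> simp
        rw [hT, List.map_cons, hl2] at hl3
        rw [List.tails_cons, hT, List.map_cons, List.map_cons, hcl, hl2, hr,
          destutter_cons_of_ne h, destutter_cons_of_ne h, hl3]


/-- Every finitely generated subgroup `U` of `G` possesses an igs: there
exist nontrivial elements `u₁, …, u_m` generating `U` such that the chain
`U_i = ⟨u_i, …, u_m⟩` (with `U_{m+1} = 1`) coincides with the chain `G_i ∩ U`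
(`i = 1, …, n+1`) after removal of consecutive duplicates (`List.destutter (· ≠ ·)`). -/
theorem stmt_10 {G : Type*} [Group G] (n : ℕ) (GG : ℕ → Subgroup G)
    (hGtop : GG 1 = ⊤) (hGbot : GG (n + 1) = ⊥)
    (hGle : ∀ i, 1 ≤ i → i ≤ n → GG (i + 1) ≤ GG i)
    (hGnorm : ∀ i, 1 ≤ i → i ≤ n → ∀ x ∈ GG i, ∀ y ∈ GG (i + 1), x * y * x⁻¹ ∈ GG (i + 1))
    (hGcyc : ∀ i, 1 ≤ i → i ≤ n → ∃ y ∈ GG i, ∀ x ∈ GG i, ∃ e : ℤ,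
      (y ^ e)⁻¹ * x ∈ GG (i + 1))
    (U : Subgroup G) (hU : U.FG) :
    ∃ (m : ℕ) (u : Fin m → G),
      (∀ i, u i ≠ 1)
      ∧ Subgroup.closure (Set.range u) = U
      ∧ @List.destutter _ (· ≠ ·) (Classical.decRel _)
          ((List.range (m + 1)).map fun i =>
            Subgroup.closure (u '' {j : Fin m | i + 1 ≤ (j : ℕ) + 1}))
        = @List.destutter _ (· ≠ ·) (Classical.decRel _)
          ((List.range (n + 1)).map fun i => GG (i + 1) ⊓ U) := by
  obtain ⟨l, hl1, hl2, hl3⟩ := @exists_list_of_chain G _ (Classical.decRel _) n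
    (fun i => GG (i + 1) ⊓ U) (by simp [hGbot]) (by
      intro i hi
      have hle := hGle (i + 1) (by omega) (by omega)
      obtain ⟨v, hv, hgen⟩ := exists_relative_generator (GG (i + 1)) (GG (i + 1 + 1)) U hle
        (hGnorm (i + 1) (by omega) (by omega)) (hGcyc (i + 1) (by omega) (by omega))
      refine ⟨v, le_antisymm (fun x hx => ?_) (sup_le ?_ (inf_le_inf_right U hle))⟩
      · obtain ⟨e, he⟩ := hgen x hx
        have h := Subgroup.mul_mem_sup
          (Subgroup.zpow_mem _ (Subgroup.mem_closure_singleton_self v) e) he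
        rwa [mul_inv_cancel_left] at h
      · simpa using hv)
  refine ⟨l.length, l.get, fun i => hl1 _ (l.get_mem i), ?_, ?_⟩
  · rw [Set.range_list_get, hl2]
    simp [hGtop]
  · rw [← hl3]
    congr 1
    refine List.ext_getElem (by simp) fun i h₁ h₂ => ?_
    simp only [List.getElem_map, List.getElem_range, List.getElem_tails]
    congr 1
    ext x
    simp only [Set.mem_image, Set.mem_ofPred_eq, List.get_eq_getElem, List.mem_drop_iff_getElem]
    constructor
    · rintro ⟨j, hj, rfl⟩
      exact ⟨j - i, by omega, by congr 1; omega⟩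
    · rintro ⟨j, hj, rfl⟩
      exact ⟨⟨i + j, by omega⟩, by simp, by simp⟩
end
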